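/- arXiv:2505.03657 — 3 statements merged into one kernel-verified Lean document; each statement's English description precedes it below -/
import Mathlib

section
/- Let (T0, T̃0) be a joint pair of abstract Friedrichs operators on a complex Hilbert space H and suppose the subspace V of the graph space W satisfies (V)-boundary conditions. Then there exists a closed subspace W2 ⊆ W⁻ of W such that W = V ∔ W2 (direct sum). Moreover, for any such W2, setting W1 := V ∩ W0^⊥ (Hilbert orthogonal complement in the graph space), one has W = W0 ∔ W1 ∔ W2, and if q0, q1, q2 denote the projections associated with this decomposition, then the operator M := D∘(q1 − q2) ∈ L(W;W') satisfies (M)-boundary conditions and V = ker(D − M). -/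
open scoped InnerProductSpace
open Filter Topology LinearPMap

noncomputable section

variable {H : Type*} [NormedAddCommGroup H] [InnerProductSpace ℂ H] [CompleteSpace H]

/-- The inner product used in the paper (antilinear in the **second** entry):
`pInner x y = ⟪y, x⟫` in Mathlib's convention. -/
def pInner {H : Type*} [NormedAddCommGroup H] [InnerProductSpace ℂ H] (x y : H) : ℂ :=
  ⟪y, x⟫_ℂ

/-- A pair of densely defined operators with common domain satisfying conditions (T1) and (T2). -/
structure IsDualPairT12 (T0 T0t : H →ₗ.[ℂ] H) (lam : ℝ) : Prop where
  dom_eq : T0.domain = T0t.domain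
  dense' : Dense (T0.domain : Set H)
  sym : ∀ (φ : T0.domain) (ψ : T0t.domain), pInner (T0 φ) (ψ : H) = pInner (φ : H) (T0t ψ)
  lam_pos : 0 < lam
  bound : ∀ (x : H) (hx : x ∈ T0.domain),
    ‖T0 ⟨x, hx⟩ + T0t ⟨x, dom_eq.le hx⟩‖ ≤ 2 * lam * ‖x‖

/-- A joint pair of abstract Friedrichs operators: (T1), (T2) and (T3). -/
structure IsFriedrichsPair (T0 T0t : H →ₗ.[ℂ] H) (lam mu : ℝ)
    extends IsDualPairT12 T0 T0t lam : Prop where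
  mu_pos : 0 < mu
  coercive : ∀ (x : H) (hx : x ∈ T0.domain),
    2 * mu * ‖x‖ ^ 2 ≤ (pInner (T0 ⟨x, hx⟩ + T0t ⟨x, dom_eq.le hx⟩) x).re

/-- The boundary form `[u|v] := ⟨T₁u , v⟩ − ⟨u , T̃₁v⟩` on the graph space
`W := dom T₁ = dom (T̃₀)*`.  The hypothesis `hW` expresses the fact `dom T₁ = dom T̃₁`. -/
def bform (T0 T0t : H →ₗ.[ℂ] H) (hW : T0t.adjoint.domain = T0.adjoint.domain)
    (u v : T0t.adjoint.domain) : ℂ :=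
  pInner (T0t.adjoint u) (v : H) - pInner (u : H) (T0.adjoint ⟨(v : H), hW.le v.2⟩)

/-- `X^[⊥]`, the `[·|·]`-orthogonal complement of `X ⊆ W` in the graph space. -/
def iorth (T0 T0t : H →ₗ.[ℂ] H) (hW : T0t.adjoint.domain = T0.adjoint.domain)
    (X : Set ↥T0t.adjoint.domain) : Set ↥T0t.adjoint.domain :=
  {u | ∀ v ∈ X, bform T0 T0t hW u v = 0}

/-- `W⁺ = {u ∈ W : [u|u] ≥ 0}`. -/
def Wplus (T0 T0t : H →ₗ.[ℂ] H) (hW : T0t.adjoint.domain = T0.adjoint.domain) :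
    Set ↥T0t.adjoint.domain :=
  {u | 0 ≤ (bform T0 T0t hW u u).re}

/-- `W⁻ = {u ∈ W : [u|u] ≤ 0}`. -/
def Wminus (T0 T0t : H →ₗ.[ℂ] H) (hW : T0t.adjoint.domain = T0.adjoint.domain) :
    Set ↥T0t.adjoint.domain :=
  {u | (bform T0 T0t hW u u).re ≤ 0}

/-- (V)-boundary conditions for a subset `V` of the graph space `W`. -/
def VBC (T0 T0t : H →ₗ.[ℂ] H) (hW : T0t.adjoint.domain = T0.adjoint.domain)
    (V : Set ↥T0t.adjoint.domain) : Prop :=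
  V ⊆ Wplus T0 T0t hW ∧ iorth T0 T0t hW V ⊆ Wminus T0 T0t hW ∧
    V = iorth T0 T0t hW (iorth T0 T0t hW V)

/-- The graph norm `‖u‖_{T₁} = ‖u‖ + ‖T₁ u‖` on the graph space. -/
def gnorm (T0t : H →ₗ.[ℂ] H) (u : T0t.adjoint.domain) : ℝ :=
  ‖(u : H)‖ + ‖T0t.adjoint u‖

/-- The distance associated with the graph norm. -/
def gdist (T0t : H →ₗ.[ℂ] H) (u v : T0t.adjoint.domain) : ℝ := gnorm T0t (u - v)

/-- Closedness (sequential) in the graph-norm topology of `W`. -/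
def GClosed (T0t : H →ₗ.[ℂ] H) (X : Set ↥T0t.adjoint.domain) : Prop :=
  ∀ f : ℕ → ↥T0t.adjoint.domain, (∀ n, f n ∈ X) →
    ∀ l, Tendsto (fun n => gdist T0t (f n) l) atTop (𝓝 0) → l ∈ X

/-- `W₀` (the domain of the closure of `T₀`), viewed as a subset of the graph space `W`. -/
def W0set (T0 T0t : H →ₗ.[ℂ] H) : Set ↥T0t.adjoint.domain :=
  {u | (u : H) ∈ T0.closure.domain}

/-- The graph inner product on `W` (in the paper's convention). -/
def gip (T0t : H →ₗ.[ℂ] H) (u v : ↥T0t.adjoint.domain) : ℂ :=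
  pInner (u : H) (v : H) + pInner (T0t.adjoint u) (T0t.adjoint v)

/-- The (Hilbert) orthogonal complement of `W₀` in the graph space. -/
def W0perp (T0 T0t : H →ₗ.[ℂ] H) : Set ↥T0t.adjoint.domain :=
  {u | ∀ v : ↥T0t.adjoint.domain, (v : H) ∈ T0.closure.domain → gip T0t u v = 0}

/-- `ker T₁` as a subset of the graph space. -/
def kerT1set (T0t : H →ₗ.[ℂ] H) : Set ↥T0t.adjoint.domain := {u | T0t.adjoint u = 0}

/-- `ker T̃₁` as a subset of the graph space. -/
def kerT1tset (T0 T0t : H →ₗ.[ℂ] H) (hW : T0t.adjoint.domain = T0.adjoint.domain) :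
    Set ↥T0t.adjoint.domain :=
  {u | T0.adjoint ⟨(u : H), hW.le u.2⟩ = 0}

/-- An operator `M ∈ L(W;W')`, encoded through the pairing `m u v = ⟨Mu, v⟩_{W',W}`
(linear in `u`, antilinear in `v`, and bounded with respect to the graph norm). -/
structure MOp (T0t : H →ₗ.[ℂ] H) where
  m : ↥T0t.adjoint.domain → ↥T0t.adjoint.domain → ℂ
  add_left : ∀ u v w, m (u + v) w = m u w + m v w
  smul_left : ∀ (c : ℂ) (u w), m (c • u) w = c * m u w
  add_right : ∀ u v w, m u (v + w) = m u v + m u w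
  smul_right : ∀ (c : ℂ) (u w), m u (c • w) = starRingEnd ℂ c * m u w
  bounded : ∃ C, ∀ u v, ‖m u v‖ ≤ C * (gnorm T0t u * gnorm T0t v)

/-- The (M)-boundary conditions for a pairing `m u v = ⟨Mu, v⟩_{W',W}`:
(M1) non-negativity and (M2) `W = ker (D − M) + ker (D + M)`. -/
def MBC (T0 T0t : H →ₗ.[ℂ] H) (hW : T0t.adjoint.domain = T0.adjoint.domain)
    (m : ↥T0t.adjoint.domain → ↥T0t.adjoint.domain → ℂ) : Prop :=
  (∀ u, 0 ≤ (m u u).re) ∧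
  (∀ w : ↥T0t.adjoint.domain, ∃ a b : ↥T0t.adjoint.domain,
    (∀ v, bform T0 T0t hW a v = m a v) ∧ (∀ v, bform T0 T0t hW b v + m b v = 0) ∧ w = a + b)

/-- `ker (D − M)` for a pairing `m`. -/
def kerDsubM (T0 T0t : H →ₗ.[ℂ] H) (hW : T0t.adjoint.domain = T0.adjoint.domain)
    (m : ↥T0t.adjoint.domain → ↥T0t.adjoint.domain → ℂ) : Set ↥T0t.adjoint.domain :=
  {u | ∀ v, bform T0 T0t hW u v = m u v}

/-- `ker (D + M)` for a pairing `m`. -/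
def kerDaddM (T0 T0t : H →ₗ.[ℂ] H) (hW : T0t.adjoint.domain = T0.adjoint.domain)
    (m : ↥T0t.adjoint.domain → ↥T0t.adjoint.domain → ℂ) : Set ↥T0t.adjoint.domain :=
  {u | ∀ v, bform T0 T0t hW u v + m u v = 0}

/-- `T̃₁` as a linear map on the graph space. -/
def auxT1t (T0 T0t : H →ₗ.[ℂ] H) (hW : T0t.adjoint.domain = T0.adjoint.domain) :
    ↥T0t.adjoint.domain →ₗ[ℂ] H :=
  T0.adjoint.toFun ∘ₗ Submodule.inclusion hW.le

/-- `T₁ + T̃₁` as a linear map on the graph space. -/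
def auxB (T0 T0t : H →ₗ.[ℂ] H) (hW : T0t.adjoint.domain = T0.adjoint.domain) :
    ↥T0t.adjoint.domain →ₗ[ℂ] H :=
  T0t.adjoint.toFun + auxT1t T0 T0t hW

section aux

variable {T0 T0t : H →ₗ.[ℂ] H} {lam mu : ℝ}

theorem bform_eq (hW : T0t.adjoint.domain = T0.adjoint.domain) (u v : T0t.adjoint.domain) :
    bform T0 T0t hW u v = ⟪(v : H), T0t.adjoint u⟫_ℂ - ⟪auxT1t T0 T0t hW v, (u : H)⟫_ℂ := rfl

theorem auxB_eq (hW : T0t.adjoint.domain = T0.adjoint.domain) (u : T0t.adjoint.domain) :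
    auxB T0 T0t hW u = T0t.adjoint u + auxT1t T0 T0t hW u := rfl

theorem dense_t (hF : IsFriedrichsPair T0 T0t lam mu) : Dense (T0t.domain : Set H) := by
  have := hF.dense'
  rwa [hF.dom_eq] at this

theorem T0_le_T1 (hF : IsFriedrichsPair T0 T0t lam mu) : T0 ≤ T0t.adjoint := by
  refine LinearPMap.IsFormalAdjoint.le_adjoint (dense_t hF) ?_
  intro x y
  have := hF.sym y x
  simp only [pInner] at this
  exact this.symm

theorem T0t_le_T1t (hF : IsFriedrichsPair T0 T0t lam mu) : T0t ≤ T0.adjoint := by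
  refine LinearPMap.IsFormalAdjoint.le_adjoint hF.dense' ?_
  apply LinearPMap.IsFormalAdjoint.symm
  intro x y
  have := hF.sym y x
  simp only [pInner] at this
  exact this.symm

theorem T1_inner (hF : IsFriedrichsPair T0 T0t lam mu) (u : T0t.adjoint.domain) (x : T0t.domain) :
    ⟪T0t.adjoint u, (x : H)⟫_ℂ = ⟪(u : H), T0t x⟫_ℂ :=
  LinearPMap.adjoint_isFormalAdjoint (dense_t hF) u x

theorem T1t_inner (hF : IsFriedrichsPair T0 T0t lam mu)
    (hW : T0t.adjoint.domain = T0.adjoint.domain) (u : T0t.adjoint.domain) (x : T0.domain) :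
    ⟪auxT1t T0 T0t hW u, (x : H)⟫_ℂ = ⟪(u : H), T0 x⟫_ℂ :=
  LinearPMap.adjoint_isFormalAdjoint hF.dense' ⟨u, hW.le u.2⟩ x

theorem auxB_dom (hF : IsFriedrichsPair T0 T0t lam mu)
    (hW : T0t.adjoint.domain = T0.adjoint.domain) (x : H) (hx : x ∈ T0.domain) :
    auxB T0 T0t hW ⟨x, (T0_le_T1 hF).1 hx⟩ = T0 ⟨x, hx⟩ + T0t ⟨x, hF.dom_eq.le hx⟩ := by
  rw [auxB_eq]
  congr 1
  · exact ((T0_le_T1 hF).2 (x := ⟨x, hx⟩) rfl).symm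
  · exact ((T0t_le_T1t hF).2 (x := ⟨x, hF.dom_eq.le hx⟩)
      (y := ⟨x, hW.le ((T0_le_T1 hF).1 hx)⟩) rfl).symm

theorem auxB_inner_dom (hF : IsFriedrichsPair T0 T0t lam mu)
    (hW : T0t.adjoint.domain = T0.adjoint.domain) (u : T0t.adjoint.domain)
    (x : H) (hx : x ∈ T0.domain) :
    ⟪auxB T0 T0t hW u, x⟫_ℂ = ⟪(u : H), auxB T0 T0t hW ⟨x, (T0_le_T1 hF).1 hx⟩⟫_ℂ := by
  rw [auxB_dom hF hW x hx, auxB_eq, inner_add_left, inner_add_right,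
    T1_inner hF u ⟨x, hF.dom_eq.le hx⟩, T1t_inner hF hW u ⟨x, hx⟩, add_comm]

theorem auxB_bound (hF : IsFriedrichsPair T0 T0t lam mu)
    (hW : T0t.adjoint.domain = T0.adjoint.domain) (u : T0t.adjoint.domain) :
    ‖auxB T0 T0t hW u‖ ≤ 2 * lam * ‖(u : H)‖ := by
  have key : ∀ x : H, ‖⟪auxB T0 T0t hW u, x⟫_ℂ‖ ≤ 2 * lam * ‖(u : H)‖ * ‖x‖ := by
    intro x
    have hcl : IsClosed {x : H | ‖⟪auxB T0 T0t hW u, x⟫_ℂ‖ ≤ 2 * lam * ‖(u : H)‖ * ‖x‖} :=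
      isClosed_le (by fun_prop) (by fun_prop)
    have hsub : (T0.domain : Set H) ⊆
        {x : H | ‖⟪auxB T0 T0t hW u, x⟫_ℂ‖ ≤ 2 * lam * ‖(u : H)‖ * ‖x‖} := by
      intro x hx
      have hx' : x ∈ T0.domain := hx
      change ‖⟪auxB T0 T0t hW u, x⟫_ℂ‖ ≤ 2 * lam * ‖(u : H)‖ * ‖x‖
      rw [auxB_inner_dom hF hW u x hx', auxB_dom hF hW x hx']
      refine (norm_inner_le_norm _ _).trans ?_
      have := hF.bound x hx'
      nlinarith [norm_nonneg (u : H)]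
    exact (hcl.closure_subset_iff.mpr hsub) (hF.dense' x)
  have h := key (auxB T0 T0t hW u)
  rw [inner_self_eq_norm_sq_to_K] at h
  have h2 : ‖auxB T0 T0t hW u‖ * ‖auxB T0 T0t hW u‖ ≤
      2 * lam * ‖(u : H)‖ * ‖auxB T0 T0t hW u‖ := by
    simpa [pow_two] using h
  rcases (norm_nonneg (auxB T0 T0t hW u)).eq_or_lt with h0 | h0
  · rw [← h0]
    have := hF.lam_pos
    positivity
  · exact le_of_mul_le_mul_right h2 h0

theorem exists_approx (hF : IsFriedrichsPair T0 T0t lam mu)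
    (hW : T0t.adjoint.domain = T0.adjoint.domain) (v : T0t.adjoint.domain) :
    ∃ x : ℕ → T0.domain, Tendsto (fun n => (x n : H)) atTop (𝓝 (v : H)) ∧
      Tendsto (fun n => auxB T0 T0t hW ⟨(x n : H), (T0_le_T1 hF).1 (x n).2⟩) atTop
        (𝓝 (auxB T0 T0t hW v)) := by
  obtain ⟨x, hx, hlim⟩ := mem_closure_iff_seq_limit.mp (hF.dense' (v : H))
  refine ⟨fun n => ⟨x n, hx n⟩, hlim, ?_⟩
  rw [tendsto_iff_norm_sub_tendsto_zero] at hlim ⊢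
  refine squeeze_zero (fun _ => norm_nonneg _) (fun n => ?_)
    (by simpa using hlim.const_mul (2 * lam))
  rw [← _root_.map_sub]
  exact auxB_bound hF hW _

theorem auxB_symm (hF : IsFriedrichsPair T0 T0t lam mu)
    (hW : T0t.adjoint.domain = T0.adjoint.domain) (u v : T0t.adjoint.domain) :
    ⟪auxB T0 T0t hW u, (v : H)⟫_ℂ = ⟪(u : H), auxB T0 T0t hW v⟫_ℂ := by
  obtain ⟨x, h1, h2⟩ := exists_approx hF hW v
  have e1 := (tendsto_const_nhds (x := auxB T0 T0t hW u)).inner (𝕜 := ℂ) h1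
  have e2 := (tendsto_const_nhds (x := (u : H))).inner (𝕜 := ℂ) h2
  refine tendsto_nhds_unique e1 (e2.congr fun n => ?_)
  exact (auxB_inner_dom hF hW u _ (x n).2).symm

theorem auxB_coercive (hF : IsFriedrichsPair T0 T0t lam mu)
    (hW : T0t.adjoint.domain = T0.adjoint.domain) (u : T0t.adjoint.domain) :
    2 * mu * ‖(u : H)‖ ^ 2 ≤ (⟪(u : H), auxB T0 T0t hW u⟫_ℂ).re := by
  obtain ⟨x, h1, h2⟩ := exists_approx hF hW u
  have e2 := (Complex.continuous_re.tendsto _).comp (h1.inner (𝕜 := ℂ) h2)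
  have e1 := ((h1.norm).pow 2).const_mul (2 * mu)
  refine le_of_tendsto_of_tendsto' e1 e2 fun n => ?_
  have := hF.coercive _ (x n).2
  simp only [pInner] at this
  simp only [Function.comp]
  rw [auxB_dom hF hW _ (x n).2]
  exact this

theorem bform_symm (hF : IsFriedrichsPair T0 T0t lam mu)
    (hW : T0t.adjoint.domain = T0.adjoint.domain) (u v : T0t.adjoint.domain) :
    bform T0 T0t hW v u = starRingEnd ℂ (bform T0 T0t hW u v) := by
  have := auxB_symm hF hW u v
  simp only [auxB_eq, inner_add_left, inner_add_right] at this
  simp only [bform_eq, _root_.map_sub, inner_conj_symm]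
  linear_combination -this

theorem bform_add_left (hW : T0t.adjoint.domain = T0.adjoint.domain) (u u' v : T0t.adjoint.domain) :
    bform T0 T0t hW (u + u') v = bform T0 T0t hW u v + bform T0 T0t hW u' v := by
  simp only [bform_eq, LinearPMap.map_add, Submodule.coe_add, inner_add_right]
  ring

theorem bform_sub_left (hW : T0t.adjoint.domain = T0.adjoint.domain) (u u' v : T0t.adjoint.domain) :
    bform T0 T0t hW (u - u') v = bform T0 T0t hW u v - bform T0 T0t hW u' v := by
  simp only [bform_eq, LinearPMap.map_sub, Submodule.coe_sub, inner_sub_right]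
  ring

theorem bform_zero_left (hW : T0t.adjoint.domain = T0.adjoint.domain) (v : T0t.adjoint.domain) :
    bform T0 T0t hW 0 v = 0 := by
  simp only [bform_eq, LinearPMap.map_zero, Submodule.coe_zero, inner_zero_right, sub_zero]

theorem bform_add_right (hW : T0t.adjoint.domain = T0.adjoint.domain)
    (u v v' : T0t.adjoint.domain) :
    bform T0 T0t hW u (v + v') = bform T0 T0t hW u v + bform T0 T0t hW u v' := by
  simp only [bform_eq, _root_.map_add, Submodule.coe_add, inner_add_left]
  ring

theorem gnorm_nonneg (u : T0t.adjoint.domain) : 0 ≤ gnorm T0t u := by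
  unfold gnorm; positivity

theorem bform_bound (hF : IsFriedrichsPair T0 T0t lam mu)
    (hW : T0t.adjoint.domain = T0.adjoint.domain) (u v : T0t.adjoint.domain) :
    ‖bform T0 T0t hW u v‖ ≤ (2 + 2 * lam) * (gnorm T0t u * gnorm T0t v) := by
  have hb := auxB_bound hF hW v
  have ht : ‖auxT1t T0 T0t hW v‖ ≤ 2 * lam * ‖(v : H)‖ + ‖T0t.adjoint v‖ := by
    have : auxT1t T0 T0t hW v = auxB T0 T0t hW v - T0t.adjoint v := by
      rw [auxB_eq]; abel
    rw [this]
    exact (norm_sub_le _ _).trans (by linarith)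
  have hl := hF.lam_pos
  rw [bform_eq]
  refine (norm_sub_le _ _).trans ?_
  have h1 := norm_inner_le_norm (𝕜 := ℂ) (v : H) (T0t.adjoint u)
  have h2 := norm_inner_le_norm (𝕜 := ℂ) (auxT1t T0 T0t hW v) (u : H)
  unfold gnorm
  have h3 := mul_le_mul_of_nonneg_right ht (norm_nonneg (u : H))
  have p1 := mul_nonneg (norm_nonneg (u : H)) (norm_nonneg (v : H))
  have p2 := mul_nonneg (norm_nonneg (u : H)) (norm_nonneg (T0t.adjoint v))
  have p3 := mul_nonneg (norm_nonneg (T0t.adjoint u)) (norm_nonneg (v : H))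
  have p4 := mul_nonneg (norm_nonneg (T0t.adjoint u)) (norm_nonneg (T0t.adjoint v))
  have r1 := mul_nonneg hl.le p1
  have r2 := mul_nonneg hl.le p2
  have r3 := mul_nonneg hl.le p3
  have r4 := mul_nonneg hl.le p4
  nlinarith

theorem closable0 (hF : IsFriedrichsPair T0 T0t lam mu) : T0.IsClosable :=
  (LinearPMap.adjoint_isClosed (dense_t hF)).isClosable.leIsClosable (T0_le_T1 hF)

theorem closure_le (hF : IsFriedrichsPair T0 T0t lam mu) : T0.closure.graph ≤ T0t.adjoint.graph := by
  rw [← (closable0 hF).graph_closure_eq_closure_graph]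
  exact Submodule.topologicalClosure_minimal _ (LinearPMap.le_graph_of_le (T0_le_T1 hF))
    (LinearPMap.adjoint_isClosed (dense_t hF))

theorem W0_graph (hF : IsFriedrichsPair T0 T0t lam mu) (u : T0t.adjoint.domain) :
    u ∈ W0set T0 T0t ↔ ((u : H), T0t.adjoint u) ∈ T0.closure.graph := by
  constructor
  · intro h
    obtain ⟨y, hy⟩ := LinearPMap.mem_domain_iff.mp (show (u : H) ∈ T0.closure.domain from h)
    have := T0t.adjoint.mem_graph_snd_inj (closure_le hF hy) (T0t.adjoint.mem_graph u) rfl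
    rwa [← this]
  · intro h
    exact LinearPMap.mem_domain_of_mem_graph h

theorem W0_ker (hF : IsFriedrichsPair T0 T0t lam mu)
    (hW : T0t.adjoint.domain = T0.adjoint.domain) {u : T0t.adjoint.domain}
    (hu : u ∈ W0set T0 T0t) (v : T0t.adjoint.domain) : bform T0 T0t hW u v = 0 := by
  rw [W0_graph hF, ← (closable0 hF).graph_closure_eq_closure_graph] at hu
  have hcl : IsClosed {p : H × H | ⟪(v : H), p.2⟫_ℂ = ⟪auxT1t T0 T0t hW v, p.1⟫_ℂ} :=
    isClosed_eq (by fun_prop) (by fun_prop)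
  have hsub : (T0.graph : Set (H × H)) ⊆
      {p : H × H | ⟪(v : H), p.2⟫_ℂ = ⟪auxT1t T0 T0t hW v, p.1⟫_ℂ} := by
    intro p hp
    obtain ⟨y, rfl⟩ := (LinearPMap.mem_graph_iff' _).mp hp
    exact (T1t_inner hF hW v y).symm
  have := (hcl.closure_subset_iff.mpr hsub) hu
  rw [bform_eq]
  exact sub_eq_zero.mpr this

theorem ker_sub_V {hW : T0t.adjoint.domain = T0.adjoint.domain}
    {V : Submodule ℂ ↥T0t.adjoint.domain} (hV : VBC T0 T0t hW (V : Set _))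
    {u : T0t.adjoint.domain} (hu : ∀ v, bform T0 T0t hW u v = 0) : u ∈ V := by
  have : u ∈ (V : Set _) := by
    rw [hV.2.2]
    exact fun v _ => hu v
  exact this

/-- graphs converging: membership of limits in `V` -/
theorem V_closed {hW : T0t.adjoint.domain = T0.adjoint.domain}
    {V : Submodule ℂ ↥T0t.adjoint.domain} (hV : VBC T0 T0t hW (V : Set _))
    {f : ℕ → T0t.adjoint.domain} (hf : ∀ n, f n ∈ V) {l : T0t.adjoint.domain}
    (h1 : Tendsto (fun n => (f n : H)) atTop (𝓝 (l : H)))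
    (h2 : Tendsto (fun n => T0t.adjoint (f n)) atTop (𝓝 (T0t.adjoint l))) : l ∈ V := by
  have : l ∈ (V : Set _) := by
    rw [hV.2.2]
    intro v hv
    have e : Tendsto (fun n => bform T0 T0t hW (f n) v) atTop (𝓝 (bform T0 T0t hW l v)) := by
      simp only [bform_eq]
      exact (tendsto_const_nhds.inner h2).sub (tendsto_const_nhds.inner h1)
    refine tendsto_nhds_unique e (tendsto_const_nhds.congr fun n => ?_)
    have hn : f n ∈ (V : Set _) := hf n
    rw [hV.2.2] at hn
    exact (hn v hv).symm
  exact this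

theorem graph_lim (hF : IsFriedrichsPair T0 T0t lam mu)
    {f : ℕ → T0t.adjoint.domain} {x y : H}
    (h1 : Tendsto (fun n => (f n : H)) atTop (𝓝 x))
    (h2 : Tendsto (fun n => T0t.adjoint (f n)) atTop (𝓝 y)) :
    ∃ l : T0t.adjoint.domain, (l : H) = x ∧ T0t.adjoint l = y := by
  have hc : IsClosed (T0t.adjoint.graph : Set (H × H)) :=
    LinearPMap.adjoint_isClosed (dense_t hF)
  have := hc.mem_of_tendsto (h1.prodMk_nhds h2)
    (Eventually.of_forall fun n => T0t.adjoint.mem_graph (f n))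
  simpa using this

theorem re_T1 (hF : IsFriedrichsPair T0 T0t lam mu)
    (hW : T0t.adjoint.domain = T0.adjoint.domain) (u : T0t.adjoint.domain) :
    2 * mu * ‖(u : H)‖ ^ 2 + (bform T0 T0t hW u u).re ≤ 2 * (⟪(u : H), T0t.adjoint u⟫_ℂ).re := by
  have h := auxB_coercive hF hW u
  rw [auxB_eq, inner_add_right, Complex.add_re] at h
  have e : (⟪auxT1t T0 T0t hW u, (u : H)⟫_ℂ).re = (⟪(u : H), auxT1t T0 T0t hW u⟫_ℂ).re :=
    inner_re_symm (𝕜 := ℂ) _ _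
  rw [bform_eq, Complex.sub_re, e]
  linarith

theorem V_lower (hF : IsFriedrichsPair T0 T0t lam mu)
    {hW : T0t.adjoint.domain = T0.adjoint.domain}
    {V : Submodule ℂ ↥T0t.adjoint.domain} (hV : VBC T0 T0t hW (V : Set _))
    {u : T0t.adjoint.domain} (hu : u ∈ V) : mu * ‖(u : H)‖ ≤ ‖T0t.adjoint u‖ := by
  have h1 := re_T1 hF hW u
  have h2 : 0 ≤ (bform T0 T0t hW u u).re := hV.1 hu
  have h3 : (⟪(u : H), T0t.adjoint u⟫_ℂ).re ≤ ‖(u : H)‖ * ‖T0t.adjoint u‖ :=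
    (Complex.re_le_norm _).trans (norm_inner_le_norm _ _)
  rcases (norm_nonneg (u : H)).eq_or_lt with h0 | h0
  · rw [← h0]; simp
  · refine le_of_mul_le_mul_left ?_ h0
    nlinarith

theorem V_surj (hF : IsFriedrichsPair T0 T0t lam mu)
    {hW : T0t.adjoint.domain = T0.adjoint.domain}
    {V : Submodule ℂ ↥T0t.adjoint.domain} (hV : VBC T0 T0t hW (V : Set _)) (h : H) :
    ∃ u ∈ V, T0t.adjoint u = h := by
  have hmu := hF.mu_pos
  let R : Submodule ℂ H := V.map T0t.adjoint.toFun
  have hRo : Rᗮ = ⊥ := by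
    rw [Submodule.eq_bot_iff]
    intro h hh
    have hV0 : ∀ u ∈ V, ⟪T0t.adjoint u, h⟫_ℂ = 0 := fun u hu =>
      hh _ (Submodule.mem_map_of_mem hu)
    have hD : ∀ x : T0.domain, ⟪(0 : H), (x : H)⟫_ℂ = ⟪h, T0 x⟫_ℂ := by
      intro x
      have hx : (⟨x, (T0_le_T1 hF).1 x.2⟩ : T0t.adjoint.domain) ∈ V := by
        apply ker_sub_V hV
        exact W0_ker hF hW (T0.le_closure.1 x.2)
      have e := hV0 _ hx
      have e2 : T0 x = T0t.adjoint ⟨x, (T0_le_T1 hF).1 x.2⟩ := (T0_le_T1 hF).2 rfl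
      rw [e2, inner_zero_left, ← inner_conj_symm, e, _root_.map_zero]
    have hdom : h ∈ T0.adjoint.domain := LinearPMap.mem_adjoint_domain_of_exists h ⟨0, hD⟩
    let w : T0t.adjoint.domain := ⟨h, hW.ge hdom⟩
    have hw0 : auxT1t T0 T0t hW w = 0 :=
      LinearPMap.adjoint_apply_eq hF.dense' (⟨h, hdom⟩ : T0.adjoint.domain) hD
    have hwV : w ∈ iorth T0 T0t hW (V : Set _) := by
      intro u hu
      rw [bform_symm hF hW u w, bform_eq, hw0, inner_zero_left, sub_zero, ← inner_conj_symm,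
        hV0 u hu]
      simp
    have h1 : (bform T0 T0t hW w w).re ≤ 0 := hV.2.1 hwV
    have h2 := auxB_coercive hF hW w
    rw [auxB_eq, hw0, add_zero] at h2
    rw [bform_eq, hw0, inner_zero_left, sub_zero] at h1
    have h3 : ‖(w : H)‖ ^ 2 ≤ 0 := by nlinarith
    have h4 : ‖(w : H)‖ = 0 := by nlinarith [norm_nonneg (w : H)]
    exact norm_eq_zero.mp h4
  have hd : h ∈ R.topologicalClosure := by
    rw [Submodule.topologicalClosure_eq_top_iff.mpr hRo]; trivial
  obtain ⟨y, hy, hlim⟩ := mem_closure_iff_seq_limit.mp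
    (show h ∈ closure (R : Set H) from hd)
  choose f hfV hf using hy
  have hfy : ∀ n, T0t.adjoint (f n) = y n := hf
  have hc : CauchySeq (fun n => (f n : H)) := by
    have hyc := hlim.cauchySeq
    rw [Metric.cauchySeq_iff] at hyc ⊢
    intro ε hε
    obtain ⟨N, hN⟩ := hyc (mu * ε) (by positivity)
    refine ⟨N, fun m hm n hn => ?_⟩
    have e1 := hN m hm n hn
    have e2 := V_lower hF hV (V.sub_mem (hfV m) (hfV n))
    rw [LinearPMap.map_sub, hfy, hfy, ← dist_eq_norm, Submodule.coe_sub, ← dist_eq_norm] at e2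
    exact lt_of_mul_lt_mul_left (e2.trans_lt e1) hmu.le
  obtain ⟨x, hx⟩ := cauchySeq_tendsto_of_complete hc
  have hy2 : Tendsto (fun n => T0t.adjoint (f n)) atTop (𝓝 h) := by
    simpa only [hfy] using hlim
  obtain ⟨l, rfl, rfl⟩ := graph_lim hF hx hy2
  exact ⟨l, V_closed hV hfV hx hy2, rfl⟩

theorem W0_decomp (hF : IsFriedrichsPair T0 T0t lam mu) (w : T0t.adjoint.domain) :
    ∃ a ∈ W0set T0 T0t, w - a ∈ W0perp T0 T0t := by
  let e := WithLp.prodContinuousLinearEquiv 2 ℂ H H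
  let K : Submodule ℂ (WithLp 2 (H × H)) := T0.closure.graph.comap (e : WithLp 2 (H × H) →ₗ[ℂ] H × H)
  have hK : IsClosed (K : Set (WithLp 2 (H × H))) :=
    IsClosed.preimage e.continuous (closable0 hF).closure_isClosed
  have : CompleteSpace K := hK.completeSpace_coe
  let p : WithLp 2 (H × H) := WithLp.toLp 2 ((w : H), T0t.adjoint w)
  have hk : K.starProjection p ∈ K := K.starProjection_apply_mem p
  have ho : p - K.starProjection p ∈ Kᗮ := K.sub_starProjection_mem_orthogonal p
  generalize K.starProjection p = k at hk ho
  have hk' : (WithLp.ofLp k) ∈ T0.closure.graph := hk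
  obtain ⟨a, ha⟩ := (LinearPMap.mem_graph_iff' _).mp (closure_le hF hk')
  refine ⟨a, ?_, ?_⟩
  · rw [W0_graph hF, ha]
    exact hk'
  · intro v hv
    have hvK : (WithLp.toLp 2 ((v : H), T0t.adjoint v) : WithLp 2 (H × H)) ∈ K :=
      (W0_graph hF v).mp hv
    have := ho _ hvK
    rw [WithLp.prod_inner_apply] at this
    simp only [WithLp.ofLp_sub, ← ha, p] at this
    simp only [gip, pInner, LinearPMap.map_sub, Submodule.coe_sub]
    exact this

theorem W0perp_self {a : T0t.adjoint.domain} (h1 : a ∈ W0set T0 T0t) (h2 : a ∈ W0perp T0 T0t) :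
    a = 0 := by
  have h := h2 a h1
  simp only [gip, pInner] at h
  have h' := congrArg Complex.re h
  rw [Complex.add_re] at h'
  have p1 : (⟪(a : H), (a : H)⟫_ℂ).re = ‖(a : H)‖ ^ 2 := inner_self_eq_norm_sq (𝕜 := ℂ) _
  have p2 : 0 ≤ (⟪T0t.adjoint a, T0t.adjoint a⟫_ℂ).re := inner_self_nonneg (𝕜 := ℂ)
  rw [p1, Complex.zero_re] at h'
  have : ‖(a : H)‖ = 0 := by nlinarith [norm_nonneg (a : H)]
  exact Subtype.ext (norm_eq_zero.mp this)

theorem proj_bound (hF : IsFriedrichsPair T0 T0t lam mu)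
    {hW : T0t.adjoint.domain = T0.adjoint.domain}
    {V : Submodule ℂ ↥T0t.adjoint.domain} (hV : VBC T0 T0t hW (V : Set _))
    {W2 : Submodule ℂ ↥T0t.adjoint.domain} (hc : GClosed T0t (W2 : Set _))
    (hd : V ⊓ W2 = ⊥) (q : ↥T0t.adjoint.domain →ₗ[ℂ] ↥T0t.adjoint.domain)
    (hq : ∀ u, q u ∈ W2) (hq' : ∀ u, u - q u ∈ V) :
    ∃ C : ℝ, ∀ u, gnorm T0t (q u) ≤ C * gnorm T0t u := by
  have hcl : IsClosed (T0t.adjoint.graph : Set (H × H)) :=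
    LinearPMap.adjoint_isClosed (dense_t hF)
  have : CompleteSpace T0t.adjoint.graph := hcl.completeSpace_coe
  let j : ↥T0t.adjoint.domain →ₗ[ℂ] T0t.adjoint.graph :=
    LinearMap.codRestrict _ (LinearMap.prod T0t.adjoint.domain.subtype T0t.adjoint.toFun)
      (fun u => T0t.adjoint.mem_graph u)
  let r : T0t.adjoint.graph →ₗ[ℂ] ↥T0t.adjoint.domain :=
    LinearMap.codRestrict _ ((LinearMap.fst ℂ H H) ∘ₗ T0t.adjoint.graph.subtype)
      (fun p => LinearPMap.mem_domain_of_mem_graph (y := p.1.2) p.2)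
  have r1 : ∀ p, ((r p : T0t.adjoint.domain) : H) = p.1.1 := fun p => rfl
  have r2 : ∀ p, T0t.adjoint (r p) = p.1.2 := fun p =>
    T0t.adjoint.mem_graph_snd_inj (T0t.adjoint.mem_graph (r p))
      (show (p.1.1, p.1.2) ∈ T0t.adjoint.graph from p.2) rfl
  have rj : ∀ u, r (j u) = u := fun u => rfl
  let g : T0t.adjoint.graph →ₗ[ℂ] T0t.adjoint.graph := j ∘ₗ q ∘ₗ r
  have hg : Continuous g := by
    refine LinearMap.continuous_of_seq_closed_graph g ?_
    intro u x y hu hgu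
    have hu' := tendsto_subtype_rng.mp hu
    have hgu' := tendsto_subtype_rng.mp hgu
    have u1 : Tendsto (fun n => ((r (u n) : T0t.adjoint.domain) : H)) atTop
        (𝓝 ((r x : T0t.adjoint.domain) : H)) := (continuous_fst.tendsto _).comp hu'
    have u2 : Tendsto (fun n => T0t.adjoint (r (u n))) atTop (𝓝 (T0t.adjoint (r x))) := by
      simp only [r2]
      exact (continuous_snd.tendsto _).comp hu'
    have g1 : Tendsto (fun n => ((q (r (u n)) : T0t.adjoint.domain) : H)) atTop
        (𝓝 ((r y : T0t.adjoint.domain) : H)) := (continuous_fst.tendsto _).comp hgu'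
    have g2 : Tendsto (fun n => T0t.adjoint (q (r (u n)))) atTop (𝓝 (T0t.adjoint (r y))) := by
      rw [r2]
      exact (continuous_snd.tendsto _).comp hgu'
    have hy2 : r y ∈ W2 := by
      refine hc (fun n => q (r (u n))) (fun n => hq _) (r y) ?_
      have z1 := (tendsto_iff_norm_sub_tendsto_zero.mp g1).add
        (tendsto_iff_norm_sub_tendsto_zero.mp g2)
      rw [add_zero] at z1
      refine z1.congr fun n => ?_
      simp only [gdist, gnorm, LinearPMap.map_sub, Submodule.coe_sub]
    have hyV : r x - r y ∈ V := by
      refine V_closed hV (f := fun n => r (u n) - q (r (u n))) (fun n => hq' _) ?_ ?_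
      · exact u1.sub g1
      · simp only [LinearPMap.map_sub]
        exact u2.sub g2
    have hz : q (r x) - r y ∈ V ⊓ W2 := by
      refine ⟨?_, W2.sub_mem (hq _) hy2⟩
      have := V.sub_mem hyV (hq' (r x))
      have e : r x - r y - (r x - q (r x)) = q (r x) - r y := by abel
      rwa [e] at this
    rw [hd, Submodule.mem_bot, sub_eq_zero] at hz
    have hjr : j (r y) = y := Subtype.ext (Prod.ext rfl (r2 y))
    rw [← hjr, ← hz]
    rfl
  let G : T0t.adjoint.graph →L[ℂ] T0t.adjoint.graph := ⟨g, hg⟩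
  refine ⟨2 * ‖G‖, fun u => ?_⟩
  have h1 : ‖j (q u)‖ ≤ ‖G‖ * ‖j u‖ := G.le_opNorm (j u)
  have nj : ∀ w, ‖j w‖ = max ‖(w : H)‖ ‖T0t.adjoint w‖ := fun w => rfl
  have h2 : ‖j u‖ ≤ gnorm T0t u := by
    rw [nj]
    exact max_le_add_of_nonneg (norm_nonneg _) (norm_nonneg _)
  have h3 : gnorm T0t (q u) ≤ 2 * ‖j (q u)‖ := by
    rw [nj, gnorm, two_mul]
    exact add_le_add (le_max_left _ _) (le_max_right _ _)
  have h4 := mul_le_mul_of_nonneg_left h2 (norm_nonneg G)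
  linarith

end aux

/-- Theorem 5.1(i): if `V` satisfies the (V)-boundary conditions, then there is a
closed subspace `W₂ ⊆ W⁻` with `W = V ∔ W₂`; for any such `W₂`, setting
`W₁ := V ∩ W₀^⊥`, one has `W = W₀ ∔ W₁ ∔ W₂`, and for the associated projections
`q₀, q₁, q₂`, the operator `M = D(q₁ − q₂)` belongs to `L(W;W')`, satisfies the
(M)-boundary conditions and `V = ker (D − M)`. -/
theorem VBC_exists_W2_and_M_of_triple_decomposition
    (T0 T0t : H →ₗ.[ℂ] H) (lam mu : ℝ) (hF : IsFriedrichsPair T0 T0t lam mu)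
    (hW : T0t.adjoint.domain = T0.adjoint.domain)
    (V : Submodule ℂ ↥T0t.adjoint.domain) (hV : VBC T0 T0t hW (V : Set _)) :
    (∃ W2 : Submodule ℂ ↥T0t.adjoint.domain,
      GClosed T0t (W2 : Set _) ∧ (W2 : Set _) ⊆ Wminus T0 T0t hW ∧
      V ⊓ W2 = ⊥ ∧ V ⊔ W2 = ⊤) ∧
    (∀ W2 : Submodule ℂ ↥T0t.adjoint.domain,
      GClosed T0t (W2 : Set _) → (W2 : Set _) ⊆ Wminus T0 T0t hW →
      V ⊓ W2 = ⊥ → V ⊔ W2 = ⊤ →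
      ((∀ w : ↥T0t.adjoint.domain, ∃ a ∈ W0set T0 T0t,
          ∃ b ∈ (V : Set _) ∩ W0perp T0 T0t, ∃ c ∈ (W2 : Set _), w = a + b + c) ∧
       (∀ a ∈ W0set T0 T0t, ∀ b ∈ (V : Set _) ∩ W0perp T0 T0t, ∀ c ∈ (W2 : Set _),
          a + b + c = 0 → a = 0 ∧ b = 0 ∧ c = 0)) ∧
      (∀ q0 q1 q2 : ↥T0t.adjoint.domain →ₗ[ℂ] ↥T0t.adjoint.domain,
        (∀ u, q0 u ∈ W0set T0 T0t ∧ q1 u ∈ (V : Set _) ∩ W0perp T0 T0t ∧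
          q2 u ∈ W2 ∧ q0 u + q1 u + q2 u = u) →
        (∃ C, ∀ u v, ‖bform T0 T0t hW (q1 u - q2 u) v‖ ≤
            C * (gnorm T0t u * gnorm T0t v)) ∧
        MBC T0 T0t hW (fun u v => bform T0 T0t hW (q1 u - q2 u) v) ∧
        (V : Set _) = kerDsubM T0 T0t hW (fun u v => bform T0 T0t hW (q1 u - q2 u) v))) := by
  have hkerV : ∀ {u}, (∀ v, bform T0 T0t hW u v = 0) → u ∈ V := fun h => ker_sub_V hV h
  have hW0V : ∀ {u}, u ∈ W0set T0 T0t → u ∈ V := fun h => hkerV (W0_ker hF hW h)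
  refine ⟨?_, ?_⟩
  · refine ⟨LinearMap.ker T0t.adjoint.toFun, ?_, ?_, ?_, ?_⟩
    · intro f hf l hl
      have hf0 : ∀ n, T0t.adjoint (f n) = 0 := hf
      change T0t.adjoint l = 0
      have hb : ∀ n, ‖T0t.adjoint l‖ ≤ gdist T0t (f n) l := by
        intro n
        simp only [gdist, gnorm, LinearPMap.map_sub, hf0, zero_sub, norm_neg]
        exact le_add_of_nonneg_left (norm_nonneg _)
      have := ge_of_tendsto' hl hb
      exact norm_le_zero_iff.mp this
    · intro u hu
      have hu0 : T0t.adjoint u = 0 := hu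
      have h := re_T1 hF hW u
      rw [hu0, inner_zero_right, Complex.zero_re] at h
      change (bform T0 T0t hW u u).re ≤ 0
      have : 0 ≤ 2 * mu * ‖(u : H)‖ ^ 2 := by
        have := hF.mu_pos
        positivity
      linarith
    · rw [Submodule.eq_bot_iff]
      rintro u ⟨hu, hu2⟩
      have hu0 : T0t.adjoint u = 0 := hu2
      have h := V_lower hF hV hu
      rw [hu0, norm_zero] at h
      have : ‖(u : H)‖ ≤ 0 := by
        have := hF.mu_pos
        by_contra hc
        push Not at hc
        nlinarith [mul_pos this hc]
      exact Subtype.ext (norm_le_zero_iff.mp this)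
    · rw [Submodule.eq_top_iff']
      intro w
      obtain ⟨u, hu, hu2⟩ := V_surj hF hV (T0t.adjoint w)
      refine Submodule.mem_sup.mpr ⟨u, hu, w - u, ?_, by abel⟩
      change T0t.adjoint (w - u) = 0
      rw [LinearPMap.map_sub, hu2, sub_self]
  · intro W2 hcl hminus hd hs
    have hdis : ∀ {u}, u ∈ V → u ∈ W2 → u = 0 := by
      intro u h1 h2
      have : u ∈ V ⊓ W2 := ⟨h1, h2⟩
      rwa [hd, Submodule.mem_bot] at this
    have huniq : ∀ a ∈ W0set T0 T0t, ∀ b ∈ (V : Set _) ∩ W0perp T0 T0t, ∀ c ∈ (W2 : Set _),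
          a + b + c = 0 → a = 0 ∧ b = 0 ∧ c = 0 := by
      intro a ha b hb c hc h
      have hc0 : c = 0 := by
        refine hdis ?_ hc
        have : c = -(a + b) := by rw [eq_neg_iff_add_eq_zero, add_comm]; exact h
        rw [this]
        exact V.neg_mem (V.add_mem (hW0V ha) hb.1)
      rw [hc0, add_zero] at h
      have hb0 : b = 0 := by
        refine W0perp_self ?_ hb.2
        have : b = -a := by rw [eq_neg_iff_add_eq_zero, add_comm]; exact h
        rw [this]
        exact T0.closure.domain.neg_mem ha
      rw [hb0, add_zero] at h
      exact ⟨h, hb0, hc0⟩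
    refine ⟨⟨?_, huniq⟩, ?_⟩
    · intro w
      have hw : w ∈ V ⊔ W2 := by rw [hs]; trivial
      obtain ⟨v, hv, c, hc, rfl⟩ := Submodule.mem_sup.mp hw
      obtain ⟨a, ha, hb⟩ := W0_decomp hF v
      exact ⟨a, ha, v - a, ⟨V.sub_mem hv (hW0V ha), hb⟩, c, hc, by abel⟩
    · intro q0 q1 q2 hq
      have h0 : ∀ u v, bform T0 T0t hW (q0 u) v = 0 := fun u v => W0_ker hF hW (hq u).1 v
      have hqV : ∀ u, u - q2 u ∈ V := by
        intro u
        have e : u - q2 u = q0 u + q1 u := by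
          rw [sub_eq_iff_eq_add]; exact (hq u).2.2.2.symm
        rw [e]
        exact V.add_mem (hW0V (hq u).1) (hq u).2.1.1
      have hsplit : ∀ u v, bform T0 T0t hW u v
          = bform T0 T0t hW (q1 u) v + bform T0 T0t hW (q2 u) v := by
        intro u v
        conv_lhs => rw [← (hq u).2.2.2]
        rw [bform_add_left, bform_add_left, h0, zero_add]
      have hV2 : ∀ {u}, u ∈ V → q2 u = 0 := by
        intro u hu
        refine hdis ?_ (hq u).2.2.1
        have := V.sub_mem hu (hqV u)
        rwa [sub_sub_cancel] at this
      have h22 : ∀ {u}, u ∈ W2 → q2 u = u := by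
        intro u hu
        have := hdis (hqV u) (W2.sub_mem hu (hq u).2.2.1)
        exact (sub_eq_zero.mp this).symm
      refine ⟨?_, ⟨?_, ?_⟩, ?_⟩
      · obtain ⟨C, hC⟩ := proj_bound hF hV hcl hd q2 (fun u => (hq u).2.2.1) hqV
        refine ⟨(2 + 2 * lam) * (1 + 2 * C), fun u v => ?_⟩
        have e : bform T0 T0t hW (q1 u - q2 u) v
            = bform T0 T0t hW u v - (bform T0 T0t hW (q2 u) v + bform T0 T0t hW (q2 u) v) := by
          rw [bform_sub_left, hsplit u v]; ring
        rw [e]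
        have b1 := bform_bound hF hW u v
        have b2 := bform_bound hF hW (q2 u) v
        have n1 := norm_sub_le (bform T0 T0t hW u v)
          (bform T0 T0t hW (q2 u) v + bform T0 T0t hW (q2 u) v)
        have n2 := norm_add_le (bform T0 T0t hW (q2 u) v) (bform T0 T0t hW (q2 u) v)
        have hl : 0 ≤ 2 + 2 * lam := by linarith [hF.lam_pos]
        have b3 := mul_le_mul_of_nonneg_left
          (mul_le_mul_of_nonneg_right (hC u) (gnorm_nonneg v)) hl
        have e2 : (2 + 2 * lam) * (1 + 2 * C) * (gnorm T0t u * gnorm T0t v)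
          = (2 + 2 * lam) * (gnorm T0t u * gnorm T0t v)
            + 2 * ((2 + 2 * lam) * (C * gnorm T0t u * gnorm T0t v)) := by ring
        rw [e2]
        linarith
      · intro u
        have e : bform T0 T0t hW (q1 u - q2 u) u
            = bform T0 T0t hW (q1 u) (q1 u) + bform T0 T0t hW (q1 u) (q2 u)
              - bform T0 T0t hW (q2 u) (q1 u) - bform T0 T0t hW (q2 u) (q2 u) := by
          conv_lhs => rw [bform_symm hF hW u, hsplit u, _root_.map_add,
            ← bform_symm hF hW, ← bform_symm hF hW]
          rw [bform_sub_left, bform_sub_left]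
          ring
        have p1 : 0 ≤ (bform T0 T0t hW (q1 u) (q1 u)).re := hV.1 (hq u).2.1.1
        have p2 : (bform T0 T0t hW (q2 u) (q2 u)).re ≤ 0 := hminus (hq u).2.2.1
        have p3 : (bform T0 T0t hW (q2 u) (q1 u)).re = (bform T0 T0t hW (q1 u) (q2 u)).re := by
          rw [bform_symm hF hW (q1 u) (q2 u), Complex.conj_re]
        change 0 ≤ (bform T0 T0t hW (q1 u - q2 u) u).re
        rw [e, Complex.sub_re, Complex.sub_re, Complex.add_re]
        linarith
      · intro w
        refine ⟨w - q2 w, q2 w, fun v => ?_, fun v => ?_, by abel⟩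
        · change _ = bform T0 T0t hW (q1 (w - q2 w) - q2 (w - q2 w)) v
          rw [bform_sub_left hW (q1 _), hsplit (w - q2 w), hV2 (hqV w), bform_zero_left]
          ring
        · change _ + bform T0 T0t hW (q1 (q2 w) - q2 (q2 w)) v = 0
          have e1 : bform T0 T0t hW (q1 (q2 w)) v = 0 := by
            have := hsplit (q2 w) v
            rw [h22 (hq w).2.2.1] at this
            simpa using this
          rw [bform_sub_left, e1, h22 (hq w).2.2.1]
          ring
      · ext u
        constructor
        · intro hu v
          change _ = bform T0 T0t hW (q1 u - q2 u) v
          rw [bform_sub_left, hsplit u, hV2 hu, bform_zero_left]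
          ring
        · intro hu
          have h2 : ∀ v, bform T0 T0t hW (q2 u) v = 0 := by
            intro v
            have h : bform T0 T0t hW u v = bform T0 T0t hW (q1 u - q2 u) v := hu v
            rw [bform_sub_left, hsplit u] at h
            linear_combination h / 2
          have := hdis (hkerV h2) (hq u).2.2.1
          have hv := hqV u
          rw [this, sub_zero] at hv
          exact hv
end
end

section
/- Let (T0, T̃0) be a joint pair of abstract Friedrichs operators on a complex Hilbert space H. If a subspace V of the graph space W is maximal non-negative in (W, [·|·]) (i.e. V ⊆ W⁺ and no subspace of W contained in W⁺ properly contains V), then V satisfies (V)-boundary conditions, that is, with Ṽ := V^[⊥] one has Ṽ ⊆ W⁻ and V = Ṽ^[⊥]. -/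
open scoped InnerProductSpace
open Filter Topology LinearPMap

noncomputable section

variable {H : Type*} [NormedAddCommGroup H] [InnerProductSpace ℂ H] [CompleteSpace H]

section AbstractForm

variable {K : Type*} [NormedAddCommGroup K] [InnerProductSpace ℂ K]

/-- Abstract version of the boundary form. -/
def abf {W : Submodule ℂ K} (A B : W →ₗ[ℂ] K) (u v : W) : ℂ :=
  ⟪(v : K), A u⟫_ℂ - ⟪B v, (u : K)⟫_ℂ

/-- Abstract data: `A = T₁`, `B = T̃₁`, `D` the common domain. -/
structure AbsData {W : Submodule ℂ K} (A B : W →ₗ[ℂ] K) (D : Set W) (c : ℝ) : Prop where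
  dense_D : Dense (Subtype.val '' D : Set K)
  hA : ∀ (u φ : W), φ ∈ D → ⟪A u, (φ : K)⟫_ℂ = ⟪(u : K), B φ⟫_ℂ
  hB : ∀ (u φ : W), φ ∈ D → ⟪B u, (φ : K)⟫_ℂ = ⟪(u : K), A φ⟫_ℂ
  hmA : ∀ y z : K, (∀ φ ∈ D, ⟪z, (φ : K)⟫_ℂ = ⟪y, B φ⟫_ℂ) → ∃ h : y ∈ W, A ⟨y, h⟩ = z
  hmB : ∀ y z : K, (∀ φ ∈ D, ⟪z, (φ : K)⟫_ℂ = ⟪y, A φ⟫_ℂ) → ∃ h : y ∈ W, B ⟨y, h⟩ = z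
  c_nonneg : 0 ≤ c
  hS : ∀ φ ∈ D, ‖A φ + B φ‖ ≤ c * ‖(φ : K)‖

variable {W : Submodule ℂ K} {A B : W →ₗ[ℂ] K} {D : Set W} {c : ℝ}

theorem AbsData.inner_S (h : AbsData A B D c) (u φ : W) (hφ : φ ∈ D) :
    ⟪A u + B u, (φ : K)⟫_ℂ = ⟪(u : K), A φ + B φ⟫_ℂ := by
  rw [inner_add_left, inner_add_right, h.hA u φ hφ, h.hB u φ hφ, add_comm]

theorem AbsData.bound_S (h : AbsData A B D c) (u : W) : ‖A u + B u‖ ≤ c * ‖(u : K)‖ := by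
  have key : ∀ x : K, ‖⟪A u + B u, x⟫_ℂ‖ ≤ c * ‖(u : K)‖ * ‖x‖ := by
    intro x
    refine h.dense_D.induction (P := fun x => ‖⟪A u + B u, x⟫_ℂ‖ ≤ c * ‖(u : K)‖ * ‖x‖)
      ?_ (isClosed_le (by fun_prop) (by fun_prop)) x
    rintro _ ⟨φ, hφ, rfl⟩
    rw [h.inner_S u φ hφ]
    calc _ ≤ ‖(u : K)‖ * ‖A φ + B φ‖ := norm_inner_le_norm _ _
      _ ≤ ‖(u : K)‖ * (c * ‖(φ : K)‖) := by gcongr; exact h.hS φ hφ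
      _ = _ := by ring
  have h1 := key (A u + B u)
  rw [inner_self_eq_norm_sq_to_K] at h1
  simp only [Complex.coe_algebraMap, norm_pow, Complex.norm_real, norm_norm] at h1
  by_cases h0 : ‖A u + B u‖ = 0
  · rw [h0]; exact mul_nonneg h.c_nonneg (norm_nonneg _)
  · have : 0 < ‖A u + B u‖ := lt_of_le_of_ne (norm_nonneg _) (Ne.symm h0)
    nlinarith

theorem AbsData.symm_S (h : AbsData A B D c) (u v : W) :
    ⟪A u + B u, (v : K)⟫_ℂ = ⟪(u : K), A v + B v⟫_ℂ := by
  obtain ⟨x, hx, hlim⟩ := mem_closure_iff_seq_limit.1 (h.dense_D (v : K))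
  choose φ hφ hφx using hx
  have hlim' : Tendsto (fun n => (φ n : K)) atTop (𝓝 (v : K)) := by simpa [hφx] using hlim
  have hS : Tendsto (fun n => A (φ n) + B (φ n)) atTop (𝓝 (A v + B v)) := by
    rw [tendsto_iff_norm_sub_tendsto_zero] at hlim' ⊢
    refine squeeze_zero (fun _ => norm_nonneg _) (fun n => ?_)
      (by simpa using hlim'.const_mul c)
    have := h.bound_S (φ n - v)
    rw [_root_.map_sub, _root_.map_sub] at this
    rw [add_sub_add_comm]
    exact this
  have l1 : Tendsto (fun n => ⟪A u + B u, (φ n : K)⟫_ℂ) atTop (𝓝 ⟪A u + B u, (v : K)⟫_ℂ) :=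
    tendsto_const_nhds.inner hlim'
  have l2 : Tendsto (fun n => ⟪(u : K), A (φ n) + B (φ n)⟫_ℂ) atTop
      (𝓝 ⟪(u : K), A v + B v⟫_ℂ) := tendsto_const_nhds.inner hS
  refine tendsto_nhds_unique l1 (l2.congr fun n => ?_)
  rw [h.inner_S u (φ n) (hφ n)]

theorem AbsData.herm (h : AbsData A B D c) (u v : W) :
    abf A B u v = starRingEnd ℂ (abf A B v u) := by
  have := h.symm_S v u
  simp only [inner_add_left, inner_add_right] at this
  simp only [abf, _root_.map_sub, inner_conj_symm]
  linear_combination -this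

theorem abf_add_left (u v w : W) : abf A B (u + v) w = abf A B u w + abf A B v w := by
  simp only [abf, _root_.map_add, Submodule.coe_add, inner_add_right]; ring

theorem abf_add_right (u v w : W) : abf A B u (v + w) = abf A B u v + abf A B u w := by
  simp only [abf, _root_.map_add, Submodule.coe_add, inner_add_left]; ring

theorem abf_smul_left (a : ℂ) (u w : W) : abf A B (a • u) w = a * abf A B u w := by
  simp only [abf, _root_.map_smul, Submodule.coe_smul, inner_smul_right]; ring

theorem abf_smul_right (a : ℂ) (u w : W) :
    abf A B u (a • w) = starRingEnd ℂ a * abf A B u w := by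
  simp only [abf, _root_.map_smul, Submodule.coe_smul, inner_smul_left]; ring

theorem AbsData.ext_mem (h : AbsData A B D c) (V : Submodule ℂ W)
    (hpos : ∀ u ∈ V, 0 ≤ (abf A B u u).re)
    (hmax : ∀ U : Submodule ℂ W, (∀ u ∈ U, 0 ≤ (abf A B u u).re) → V ≤ U → U = V)
    (u : W) (hu : ∀ v ∈ V, abf A B u v = 0) (huu : 0 ≤ (abf A B u u).re) : u ∈ V := by
  have := hmax (V ⊔ Submodule.span ℂ {u}) ?_ le_sup_left
  · rw [← this]
    exact Submodule.mem_sup_right (Submodule.mem_span_singleton_self u)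
  · intro w hw
    obtain ⟨v, hv, y, hy, rfl⟩ := Submodule.mem_sup.1 hw
    obtain ⟨a, rfl⟩ := Submodule.mem_span_singleton.1 hy
    have h1 := hu v hv
    have h2 : abf A B v u = 0 := by rw [h.herm, h1, _root_.map_zero]
    simp only [abf_add_left, abf_add_right, abf_smul_left, abf_smul_right, h1, h2, mul_zero,
      add_zero, zero_add, ← mul_assoc, ← Complex.normSq_eq_conj_mul_self, Complex.add_re, Complex.re_ofReal_mul]
    have := hpos v hv
    have := mul_nonneg (Complex.normSq_nonneg a) huu
    linarith

theorem AbsData.tendsto_form (h : AbsData A B D c) (x : ℕ → W) (w : W)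
    (h1 : Tendsto (fun n => (x n : K)) atTop (𝓝 (w : K)))
    (h2 : Tendsto (fun n => A (x n)) atTop (𝓝 (A w))) :
    Tendsto (fun n => abf A B (x n) (x n)) atTop (𝓝 (abf A B w w)) := by
  have hS : Tendsto (fun n => A (x n) + B (x n)) atTop (𝓝 (A w + B w)) := by
    rw [tendsto_iff_norm_sub_tendsto_zero] at h1 ⊢
    refine squeeze_zero (fun _ => norm_nonneg _) (fun n => ?_)
      (by simpa using h1.const_mul c)
    have := h.bound_S (x n - w)
    rw [_root_.map_sub, _root_.map_sub] at this
    rw [add_sub_add_comm]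
    exact this
  have hB : Tendsto (fun n => B (x n)) atTop (𝓝 (B w)) := by
    simpa using hS.sub h2
  exact (h1.inner h2).sub (hB.inner h1)

/-- The graph embedding. -/
def graphEmb (A : W →ₗ[ℂ] K) : W →ₗ[ℂ] WithLp 2 (K × K) :=
  (WithLp.linearEquiv 2 ℂ (K × K)).symm.toLinearMap ∘ₗ (W.subtype.prod A)

theorem graphEmb_inner (u v : W) :
    ⟪graphEmb A u, graphEmb A v⟫_ℂ = ⟪(u : K), (v : K)⟫_ℂ + ⟪A u, A v⟫_ℂ := rfl

theorem AbsData.graph_closed (h : AbsData A B D c) (x : ℕ → W) (p : WithLp 2 (K × K))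
    (hx : Tendsto (fun n => graphEmb A (x n)) atTop (𝓝 p)) :
    ∃ w : W, graphEmb A w = p ∧ Tendsto (fun n => (x n : K)) atTop (𝓝 (w : K)) ∧
      Tendsto (fun n => A (x n)) atTop (𝓝 (A w)) := by
  have h1 : Tendsto (fun n => (x n : K)) atTop (𝓝 p.fst) :=
    ((WithLp.fstL 2 ℂ K K).continuous.tendsto p).comp hx
  have h2 : Tendsto (fun n => A (x n)) atTop (𝓝 p.snd) :=
    ((WithLp.sndL 2 ℂ K K).continuous.tendsto p).comp hx
  obtain ⟨hm, he⟩ := h.hmA p.fst p.snd (fun φ hφ => by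
    have l1 : Tendsto (fun n => ⟪A (x n), (φ : K)⟫_ℂ) atTop (𝓝 ⟪p.snd, (φ : K)⟫_ℂ) :=
      h2.inner tendsto_const_nhds
    have l2 : Tendsto (fun n => ⟪(x n : K), B φ⟫_ℂ) atTop (𝓝 ⟪p.fst, B φ⟫_ℂ) :=
      h1.inner tendsto_const_nhds
    refine tendsto_nhds_unique l1 (l2.congr fun n => ?_)
    rw [h.hA _ φ hφ])
  refine ⟨⟨p.fst, hm⟩, ?_, h1, by rw [he]; exact h2⟩
  apply (WithLp.linearEquiv 2 ℂ (K × K)).injective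
  exact Prod.ext rfl he

variable [CompleteSpace K]

theorem AbsData.main (h : AbsData A B D c) (V : Submodule ℂ W)
    (hpos : ∀ u ∈ V, 0 ≤ (abf A B u u).re)
    (hmax : ∀ U : Submodule ℂ W, (∀ u ∈ U, 0 ≤ (abf A B u u).re) → V ≤ U → U = V) :
    (∀ u, (∀ v ∈ V, abf A B u v = 0) → (abf A B u u).re ≤ 0) ∧
    (∀ w, w ∈ V ↔ ∀ u, (∀ v ∈ V, abf A B u v = 0) → abf A B w u = 0) := by
  refine ⟨fun u hu => ?_, fun w => ⟨fun hw u hu => ?_, fun hw => ?_⟩⟩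
  · by_contra! hc
    have := hu u (h.ext_mem V hpos hmax u hu hc.le)
    rw [this] at hc
    simp at hc
  · rw [h.herm, hu w hw, _root_.map_zero]
  · have hD : ∀ φ ∈ D, φ ∈ V := by
      intro φ hφ
      have hz : ∀ v, abf A B φ v = 0 := fun v => by
        simp only [abf]
        rw [h.hB v φ hφ, sub_self]
      exact h.ext_mem V hpos hmax φ (fun v _ => hz v) (by rw [hz]; simp)
    -- closedness of V
    set G := (V.map (graphEmb A)).topologicalClosure with hG
    have hcl : ∀ p ∈ G, ∃ a ∈ V, graphEmb A a = p := by
      have hseq : ∀ p ∈ G, ∃ x : ℕ → W, (∀ n, x n ∈ V) ∧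
          Tendsto (fun n => graphEmb A (x n)) atTop (𝓝 p) := by
        intro p hp
        have hp' : p ∈ closure ((V.map (graphEmb A) : Submodule ℂ _) : Set (WithLp 2 (K × K))) := hp
        obtain ⟨y, hy, hlim⟩ := mem_closure_iff_seq_limit.1 hp'
        choose x hx hxy using hy
        exact ⟨x, hx, by simpa only [hxy] using hlim⟩
      have hU : G.comap (graphEmb A) = V := by
        apply hmax
        · intro u hu
          obtain ⟨x, hx, hlim⟩ := hseq _ hu
          obtain ⟨w', hw', l1, l2⟩ := h.graph_closed x _ hlim
          have : w' = u := Subtype.ext (congrArg WithLp.fst hw')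
          subst this
          have l3 := (Complex.continuous_re.tendsto _).comp (h.tendsto_form x w' l1 l2)
          exact ge_of_tendsto' l3 fun n => hpos _ (hx n)
        · intro v hv
          exact Submodule.le_topologicalClosure _ (Submodule.mem_map_of_mem hv)
      intro p hp
      obtain ⟨x, hx, hlim⟩ := hseq _ hp
      obtain ⟨a, ha, -, -⟩ := h.graph_closed x _ hlim
      refine ⟨a, ?_, ha⟩
      rw [← hU, Submodule.mem_comap, ha]
      exact hp
    have : CompleteSpace G := (Submodule.isClosed_topologicalClosure _).completeSpace_coe
    obtain ⟨a, haV, ha⟩ := hcl _ (Submodule.starProjection_apply_mem G (graphEmb A w))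
    have horth := Submodule.sub_starProjection_mem_orthogonal (K := G) (graphEmb A w)
    rw [← ha, ← _root_.map_sub] at horth
    set g := w - a with hg
    have hgV : ∀ v ∈ V, ⟪(v : K), (g : K)⟫_ℂ + ⟪A v, A g⟫_ℂ = 0 := by
      intro v hv
      rw [← graphEmb_inner]
      exact (Submodule.mem_orthogonal _ _).1 horth _
        (Submodule.le_topologicalClosure _ (Submodule.mem_map_of_mem hv))
    obtain ⟨hm, he⟩ := h.hmB (A g) (-(g : K)) (fun φ hφ => by
      have := congrArg (starRingEnd ℂ) (hgV φ (hD φ hφ))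
      simp only [_root_.map_add, inner_conj_symm, _root_.map_zero] at this
      rw [inner_neg_left]
      linear_combination -this)
    have hrep : ∀ v, abf A B v ⟨A g, hm⟩ = ⟪A g, A v⟫_ℂ + ⟪(g : K), (v : K)⟫_ℂ := by
      intro v
      simp only [abf, he, inner_neg_left]
      ring
    have hrepV : ∀ v ∈ V, abf A B v ⟨A g, hm⟩ = 0 := by
      intro v hv
      have := congrArg (starRingEnd ℂ) (hgV v hv)
      simp only [_root_.map_add, inner_conj_symm, _root_.map_zero] at this
      rw [hrep]
      linear_combination this
    have h0 := hw ⟨A g, hm⟩ (fun v hv => by rw [h.herm, hrepV v hv, _root_.map_zero])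
    have h1 := hrepV a haV
    have h2 : abf A B g ⟨A g, hm⟩ = 0 := by
      have : w = g + a := by rw [hg]; abel
      rw [this, abf_add_left, h1, add_zero] at h0
      exact h0
    rw [hrep, add_comm, ← graphEmb_inner, inner_self_eq_zero] at h2
    have h3 : g = 0 := Subtype.ext (congrArg WithLp.fst h2)
    have : w = a := sub_eq_zero.1 h3
    rw [this]; exact haV

end AbstractForm

theorem friedrichs_absData (T0 T0t : H →ₗ.[ℂ] H) (lam mu : ℝ)
    (hF : IsFriedrichsPair T0 T0t lam mu)
    (hW : T0t.adjoint.domain = T0.adjoint.domain) :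
    AbsData T0t.adjoint.toFun (T0.adjoint.toFun ∘ₗ Submodule.inclusion hW.le)
      {u | (u : H) ∈ T0.domain} (2 * lam) := by
  have hd : Dense (T0.domain : Set H) := hF.dense'
  have hdt : Dense (T0t.domain : Set H) := hF.dom_eq ▸ hd
  have f1 := adjoint_isFormalAdjoint hd
  have f2 := adjoint_isFormalAdjoint hdt
  have fa : T0t.IsFormalAdjoint T0 := fun x y => (hF.sym y x).symm
  have le1 : T0 ≤ T0t.adjoint := IsFormalAdjoint.le_adjoint hdt fa
  have le2 : T0t ≤ T0.adjoint := IsFormalAdjoint.le_adjoint hd fa.symm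
  have eA : ∀ (φ : T0t.adjoint.domain) (hφ : (φ : H) ∈ T0.domain),
      T0t.adjoint.toFun φ = T0 ⟨φ, hφ⟩ := fun φ hφ =>
    (le1.2 (x := ⟨φ, hφ⟩) (y := φ) rfl).symm
  have eB : ∀ (φ : T0t.adjoint.domain) (hφ : (φ : H) ∈ T0.domain),
      (T0.adjoint.toFun ∘ₗ Submodule.inclusion hW.le) φ = T0t ⟨φ, hF.dom_eq.le hφ⟩ :=
    fun φ hφ => (le2.2 (x := ⟨φ, hF.dom_eq.le hφ⟩) (y := ⟨φ, hW.le φ.2⟩) rfl).symm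
  refine ⟨?_, ?_, ?_, ?_, ?_, ?_, ?_⟩
  · convert hd
    ext x
    constructor
    · rintro ⟨φ, hφ, rfl⟩; exact hφ
    · intro hx; exact ⟨⟨x, le1.1 hx⟩, hx, rfl⟩
  · intro u φ hφ
    rw [eB φ hφ]
    exact f2 u ⟨φ, hF.dom_eq.le hφ⟩
  · intro u φ hφ
    rw [eA φ hφ]
    exact f1 ⟨u, hW.le u.2⟩ ⟨φ, hφ⟩
  · intro y z hyz
    have key : ∀ x : T0t.domain, ⟪z, (x : H)⟫_ℂ = ⟪y, T0t x⟫_ℂ := by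
      intro x
      have hx : (x : H) ∈ T0.domain := hF.dom_eq.ge x.2
      have := hyz ⟨x, le1.1 hx⟩ hx
      rw [eB _ hx] at this
      exact this
    have hm := mem_adjoint_domain_of_exists y ⟨z, key⟩
    exact ⟨hm, adjoint_apply_eq hdt ⟨y, hm⟩ key⟩
  · intro y z hyz
    have key : ∀ x : T0.domain, ⟪z, (x : H)⟫_ℂ = ⟪y, T0 x⟫_ℂ := by
      intro x
      have := hyz ⟨x, le1.1 x.2⟩ x.2
      rw [eA _ x.2] at this
      exact this
    have hm := mem_adjoint_domain_of_exists y ⟨z, key⟩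
    exact ⟨hW.ge hm, adjoint_apply_eq hd ⟨y, hm⟩ key⟩
  · have := hF.lam_pos; positivity
  · intro φ hφ
    rw [eA φ hφ, eB φ hφ]
    exact hF.bound φ hφ

/-- Theorem 2.6(b): if `V` is a maximal non-negative subspace of `(W, [·|·])`,
then `V` satisfies the (V)-boundary conditions. -/
theorem maximal_nonneg_implies_VBC
    (T0 T0t : H →ₗ.[ℂ] H) (lam mu : ℝ) (hF : IsFriedrichsPair T0 T0t lam mu)
    (hW : T0t.adjoint.domain = T0.adjoint.domain)
    (V : Submodule ℂ ↥T0t.adjoint.domain)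
    (hpos : (V : Set ↥T0t.adjoint.domain) ⊆ Wplus T0 T0t hW)
    (hmax : ∀ U : Submodule ℂ ↥T0t.adjoint.domain,
      (U : Set ↥T0t.adjoint.domain) ⊆ Wplus T0 T0t hW → (V : Set ↥T0t.adjoint.domain) ⊆ (U : Set ↥T0t.adjoint.domain) →
      (U : Set ↥T0t.adjoint.domain) = (V : Set ↥T0t.adjoint.domain)) :
    iorth T0 T0t hW (V : Set ↥T0t.adjoint.domain) ⊆ Wminus T0 T0t hW ∧
    (V : Set ↥T0t.adjoint.domain) = iorth T0 T0t hW (iorth T0 T0t hW (V : Set ↥T0t.adjoint.domain)) := by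

  obtain ⟨h1, h2⟩ := (friedrichs_absData T0 T0t lam mu hF hW).main V hpos
    (fun U hU hVU => SetLike.coe_injective (hmax U hU hVU))
  exact ⟨h1, Set.ext h2⟩
end
end

section
/- Let (T0, T̃0) be a joint pair of abstract Friedrichs operators on a complex Hilbert space H and let M ∈ L(W;W') satisfy (M)-boundary conditions. Then ker D = ker M = ker M* and ran D = ran M = ran M*. -/
open scoped InnerProductSpace
open Filter Topology LinearPMap

noncomputable section

variable {H : Type*} [NormedAddCommGroup H] [InnerProductSpace ℂ H] [CompleteSpace H]

section AbstractForms

variable {W : Type*} [AddCommGroup W] [Module ℂ W]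

/-- Cauchy–Schwarz type consequence of accretivity. -/
theorem form_null_symm (m : W → W → ℂ)
    (al : ∀ u v w, m (u + v) w = m u w + m v w)
    (sl : ∀ (c : ℂ) (u w), m (c • u) w = c * m u w)
    (ar : ∀ u v w, m u (v + w) = m u v + m u w)
    (sr : ∀ (c : ℂ) (u w), m u (c • w) = starRingEnd ℂ c * m u w)
    (pos : ∀ u, 0 ≤ (m u u).re) (a : W) (ha : (m a a).re = 0) (v : W) :
    m a v = - starRingEnd ℂ (m v a) := by
  have key : ∀ v : W, (m a v).re + (m v a).re = 0 := by
    intro v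
    by_contra hne
    set s := (m a v).re + (m v a).re with hs
    have h := pos (((-((m v v).re + 1) / s : ℝ) : ℂ) • a + v)
    simp only [al, ar, sl, sr, Complex.conj_ofReal, Complex.add_re, Complex.re_ofReal_mul, ha] at h
    have h2 : (-((m v v).re + 1) / s) * s = -((m v v).re + 1) := by
      field_simp
    rw [hs] at h2
    rw [hs] at h
    nlinarith
  have h1 := key v
  have h2 := key (Complex.I • v)
  simp [sl, sr] at h2
  apply Complex.ext
  · simp; linarith
  · simp; linarith

variable (d m : W → W → ℂ)

theorem form_ker_aux
    (dherm : ∀ u v, d u v = starRingEnd ℂ (d v u))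
    (al : ∀ u v w, m (u + v) w = m u w + m v w)
    (sl : ∀ (c : ℂ) (u w), m (c • u) w = c * m u w)
    (ar : ∀ u v w, m u (v + w) = m u v + m u w)
    (sr : ∀ (c : ℂ) (u w), m u (c • w) = starRingEnd ℂ c * m u w)
    (dal : ∀ u v w, d (u + v) w = d u w + d v w)
    (pos : ∀ u, 0 ≤ (m u u).re)
    (dec : ∀ w, ∃ a b, (∀ v, d a v = m a v) ∧ (∀ v, d b v + m b v = 0) ∧ w = a + b)
    (a b : W) (ha : ∀ v, d a v = m a v) (hb : ∀ v, d b v + m b v = 0)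
    (hab : ∀ v, d a v = d b v) : (∀ v, d a v = 0) := by
  have haa : (m a a).re = 0 ∧ (m b b).re = 0 := by
    have h1 : (d a a).re = (d b b).re := by
      rw [hab a, dherm b a, ← hab b]; simp
    have h2 := ha a
    have h3 := congrArg Complex.re (hb b)
    rw [Complex.add_re, Complex.zero_re] at h3
    have := pos a
    have := pos b
    rw [h2] at h1
    constructor <;> linarith
  have na := form_null_symm m al sl ar sr pos a haa.1
  have nb := form_null_symm m al sl ar sr pos b haa.2
  -- `d v a = 0` for all `v`
  have main : ∀ v, d v a = 0 := by
    intro v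
    obtain ⟨p, q, hp, hq, rfl⟩ := dec v
    rw [dal]
    have e1 : d p a = 0 := by
      have h := na p
      rw [← ha, ← hp, ← dherm] at h
      have h' : d a p = 0 := by linear_combination h / 2
      rw [dherm, h']; simp
    have e2 : d q a = 0 := by
      have h := nb q
      have h3 : m b q = - d b q := by linear_combination hb q
      have h4 : m q b = - d q b := by linear_combination hq b
      rw [h3, h4, _root_.map_neg, ← dherm] at h
      have h' : d b q = 0 := by linear_combination -h / 2
      rw [dherm, hab, h']; simp
    rw [e1, e2, add_zero]
  intro v
  rw [dherm, main]; simp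

theorem form_ker_ran
    (dherm : ∀ u v, d u v = starRingEnd ℂ (d v u))
    (al : ∀ u v w, m (u + v) w = m u w + m v w)
    (sl : ∀ (c : ℂ) (u w), m (c • u) w = c * m u w)
    (ar : ∀ u v w, m u (v + w) = m u v + m u w)
    (sr : ∀ (c : ℂ) (u w), m u (c • w) = starRingEnd ℂ c * m u w)
    (dal : ∀ u v w, d (u + v) w = d u w + d v w)
    (dsl : ∀ (c : ℂ) (u w), d (c • u) w = c * d u w)
    (pos : ∀ u, 0 ≤ (m u u).re)
    (dec : ∀ w, ∃ a b, (∀ v, d a v = m a v) ∧ (∀ v, d b v + m b v = 0) ∧ w = a + b)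
    (hr : (∀ w, (∀ v, d w v = 0) → ∀ v, m w v = 0) →
      ∀ u, ∃ u', ∀ v, m v u = d v u') :
    ({u : W | ∀ v, d u v = 0} = {u | ∀ v, m u v = 0} ∧
      {u : W | ∀ v, m u v = 0} = {u | ∀ v, starRingEnd ℂ (m v u) = 0}) ∧
    ({f : W → ℂ | ∃ u, f = fun v => d u v} = {f | ∃ u, f = fun v => m u v} ∧
      {f : W → ℂ | ∃ u, f = fun v => m u v} =
        {f | ∃ u, f = fun v => starRingEnd ℂ (m v u)}) := by
  have aux := form_ker_aux d m dherm al sl ar sr dal pos dec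
  have kDM : ∀ w, (∀ v, d w v = 0) → ∀ v, m w v = 0 := by
    intro w hw v
    obtain ⟨a, b, ha, hb, rfl⟩ := dec w
    have hz := aux a ((-1 : ℂ) • b) ha
      (fun v => by rw [dsl, sl]; linear_combination -(hb v))
      (fun v => by rw [dsl]; have := hw v; rw [dal] at this; linear_combination this)
    have h1 := hw v
    rw [dal] at h1
    rw [al]
    linear_combination -(ha v) + hb v + 2 * hz v - h1
  have kMD : ∀ w, (∀ v, m w v = 0) → ∀ v, d w v = 0 := by
    intro w hw v
    obtain ⟨a, b, ha, hb, rfl⟩ := dec w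
    have hab : ∀ v, d a v = d b v := fun v => by
      have := hw v
      rw [al] at this
      linear_combination ha v - hb v + this
    have hz := aux a b ha hb hab
    rw [dal, ← hab, hz, add_zero]
  have null : ∀ u, (m u u).re = 0 → ∀ v, m u v = - starRingEnd ℂ (m v u) :=
    form_null_symm m al sl ar sr pos
  have DM : {f : W → ℂ | ∃ u, f = fun v => d u v} = {f | ∃ u, f = fun v => m u v} := by
    ext f
    constructor
    · rintro ⟨u, rfl⟩
      obtain ⟨a, b, ha, hb, rfl⟩ := dec u
      refine ⟨a + (-1 : ℂ) • b, funext fun v => ?_⟩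
      rw [dal, al, sl]
      linear_combination ha v + hb v
    · rintro ⟨u, rfl⟩
      obtain ⟨a, b, ha, hb, rfl⟩ := dec u
      refine ⟨a + (-1 : ℂ) • b, funext fun v => ?_⟩
      rw [dal, al, dsl]
      linear_combination -(ha v) + hb v
  refine ⟨⟨?_, ?_⟩, DM, ?_⟩
  · ext u
    exact ⟨kDM u, kMD u⟩
  · ext u
    constructor
    · intro h v
      have := null u (by rw [h u]; simp) v
      rw [h v] at this
      linear_combination this
    · intro h v
      have h0 : m u u = 0 := by simpa using h u
      have := null u (by rw [h0]; simp) v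
      rw [h v] at this
      simpa using this
  · rw [← DM]
    ext f
    constructor
    · rintro ⟨u, rfl⟩
      obtain ⟨u', hu'⟩ := hr kDM u
      refine ⟨u', funext fun v => ?_⟩
      rw [dherm u v]
      congr 1
      obtain ⟨a, b, ha, hb, rfl⟩ := dec v
      rw [dal, al]
      linear_combination ha u + hb u - hu' b + hu' a + ha u' - hb u'
    · rintro ⟨u, rfl⟩
      obtain ⟨u', hu'⟩ := hr kDM u
      refine ⟨u', funext fun v => ?_⟩
      rw [dherm u' v, hu']

end AbstractForms

section Friedrichs

variable {T0 T0t : H →ₗ.[ℂ] H} {lam : ℝ}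

theorem A_inner (hF : IsDualPairT12 T0 T0t lam) (hW : T0t.adjoint.domain = T0.adjoint.domain)
    (v : T0t.adjoint.domain) (x : H) (hx : x ∈ T0.domain) :
    ⟪T0t.adjoint v + T0.adjoint ⟨(v : H), hW.le v.2⟩, x⟫_ℂ
      = ⟪(v : H), T0 ⟨x, hx⟩ + T0t ⟨x, hF.dom_eq.le hx⟩⟫_ℂ := by
  have hd : Dense (T0t.domain : Set H) := hF.dom_eq ▸ hF.dense'
  have h1 := LinearPMap.adjoint_isFormalAdjoint hd v ⟨x, hF.dom_eq.le hx⟩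
  have h2 := LinearPMap.adjoint_isFormalAdjoint hF.dense' ⟨(v : H), hW.le v.2⟩ ⟨x, hx⟩
  rw [inner_add_left, inner_add_right]
  simp only at h1 h2
  rw [h1, h2, add_comm]

theorem A_bound (hF : IsDualPairT12 T0 T0t lam) (hW : T0t.adjoint.domain = T0.adjoint.domain)
    (v : T0t.adjoint.domain) :
    ‖T0t.adjoint v + T0.adjoint ⟨(v : H), hW.le v.2⟩‖ ≤ 2 * lam * ‖(v : H)‖ := by
  set z := T0t.adjoint v + T0.adjoint ⟨(v : H), hW.le v.2⟩ with hz
  have hcl : IsClosed {x : H | ‖⟪z, x⟫_ℂ‖ ≤ 2 * lam * ‖(v : H)‖ * ‖x‖} :=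
    isClosed_le (by fun_prop) (by fun_prop)
  have hall : ∀ x : H, ‖⟪z, x⟫_ℂ‖ ≤ 2 * lam * ‖(v : H)‖ * ‖x‖ := by
    intro x
    refine hF.dense'.induction (P := fun x => ‖⟪z, x⟫_ℂ‖ ≤ 2 * lam * ‖(v : H)‖ * ‖x‖)
      ?_ hcl x
    intro y hy
    rw [hz, A_inner hF hW v y hy]
    refine (norm_inner_le_norm _ _).trans ?_
    have := mul_le_mul_of_nonneg_left (hF.bound y hy) (norm_nonneg (v : H))
    linarith
  have h := hall z
  rw [inner_self_eq_norm_sq_to_K] at h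
  simp at h
  by_cases h0 : ‖z‖ = 0
  · rw [h0]; have := hF.lam_pos; positivity
  · have : 0 < ‖z‖ := lt_of_le_of_ne (norm_nonneg _) (Ne.symm h0)
    rw [sq] at h
    exact le_of_mul_le_mul_right h this

theorem dom_sub (hF : IsDualPairT12 T0 T0t lam) :
    T0 ≤ T0t.adjoint ∧ T0t ≤ T0.adjoint := by
  have hd : Dense (T0t.domain : Set H) := hF.dom_eq ▸ hF.dense'
  have hfa : T0t.IsFormalAdjoint T0 := fun x y => (hF.sym y x).symm
  exact ⟨hfa.le_adjoint hd, hfa.symm.le_adjoint hF.dense'⟩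

theorem A_symm (hF : IsDualPairT12 T0 T0t lam) (hW : T0t.adjoint.domain = T0.adjoint.domain)
    (v w : T0t.adjoint.domain) :
    ⟪T0t.adjoint v + T0.adjoint ⟨(v : H), hW.le v.2⟩, (w : H)⟫_ℂ
      = ⟪(v : H), T0t.adjoint w + T0.adjoint ⟨(w : H), hW.le w.2⟩⟫_ℂ := by
  obtain ⟨l1, l2⟩ := dom_sub hF
  set z := T0t.adjoint v + T0.adjoint ⟨(v : H), hW.le v.2⟩ with hz
  set y := T0t.adjoint w + T0.adjoint ⟨(w : H), hW.le w.2⟩ with hy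
  have key : ∀ x : H, ‖⟪z, (w : H)⟫_ℂ - ⟪(v : H), y⟫_ℂ‖
      ≤ 4 * lam * ‖(v : H)‖ * ‖(w : H) - x‖ := by
    intro x
    refine hF.dense'.induction (P := fun x => ‖⟪z, (w : H)⟫_ℂ - ⟪(v : H), y⟫_ℂ‖
      ≤ 4 * lam * ‖(v : H)‖ * ‖(w : H) - x‖) ?_ (isClosed_le (by fun_prop) (by fun_prop)) x
    intro x hx
    have hxt := hF.dom_eq.le hx
    have e1 : T0t.adjoint ⟨x, l1.1 hx⟩ = T0 ⟨x, hx⟩ :=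
      (l1.2 (x := ⟨x, hx⟩) (y := ⟨x, l1.1 hx⟩) rfl).symm
    have e2 : T0.adjoint ⟨x, l2.1 hxt⟩ = T0t ⟨x, hxt⟩ :=
      (l2.2 (x := ⟨x, hxt⟩) (y := ⟨x, l2.1 hxt⟩) rfl).symm
    have hb := A_bound hF hW (w - ⟨x, l1.1 hx⟩)
    have e3 : T0.adjoint ⟨((w - ⟨x, l1.1 hx⟩ : T0t.adjoint.domain) : H),
        hW.le (w - ⟨x, l1.1 hx⟩ : T0t.adjoint.domain).2⟩
        = T0.adjoint ⟨(w : H), hW.le w.2⟩ - T0.adjoint ⟨x, l2.1 hxt⟩ := by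
      rw [← LinearPMap.map_sub]; rfl
    rw [e3, LinearPMap.map_sub, e1, e2] at hb
    have e4 : T0t.adjoint w - T0 ⟨x, hx⟩ + (T0.adjoint ⟨(w : H), hW.le w.2⟩ - T0t ⟨x, hxt⟩)
        = y - (T0 ⟨x, hx⟩ + T0t ⟨x, hxt⟩) := by rw [hy]; abel
    rw [e4] at hb
    have e5 : ((w - ⟨x, l1.1 hx⟩ : T0t.adjoint.domain) : H) = (w : H) - x := rfl
    rw [e5] at hb
    have hA := A_inner hF hW v x hx
    rw [← hz] at hA
    have e6 : ⟪z, (w : H)⟫_ℂ - ⟪(v : H), y⟫_ℂ = ⟪z, (w : H) - x⟫_ℂ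
        - ⟪(v : H), y - (T0 ⟨x, hx⟩ + T0t ⟨x, hxt⟩)⟫_ℂ := by
      rw [inner_sub_right, inner_sub_right, hA]; ring
    rw [e6]
    have n1 := norm_inner_le_norm (𝕜 := ℂ) z ((w : H) - x)
    have n2 := norm_inner_le_norm (𝕜 := ℂ) (v : H) (y - (T0 ⟨x, hx⟩ + T0t ⟨x, hxt⟩))
    have n3 := mul_le_mul_of_nonneg_left hb (norm_nonneg (v : H))
    have n4 := mul_le_mul_of_nonneg_right (A_bound hF hW v) (norm_nonneg ((w : H) - x))
    rw [← hz] at n4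
    have n5 := norm_sub_le ⟪z, (w : H) - x⟫_ℂ
      ⟪(v : H), y - (T0 ⟨x, hx⟩ + T0t ⟨x, hxt⟩)⟫_ℂ
    linarith
  have h := key w
  rw [sub_self, norm_zero, mul_zero] at h
  exact sub_eq_zero.1 (norm_le_zero_iff.1 h)

theorem bform_herm (hF : IsDualPairT12 T0 T0t lam)
    (hW : T0t.adjoint.domain = T0.adjoint.domain) (u v : T0t.adjoint.domain) :
    bform T0 T0t hW u v = starRingEnd ℂ (bform T0 T0t hW v u) := by
  have h := A_symm hF hW v u
  simp only [bform, pInner, _root_.map_sub, inner_conj_symm]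
  rw [inner_add_left, inner_add_right] at h
  linear_combination -h

theorem bform_dom (hF : IsDualPairT12 T0 T0t lam)
    (hW : T0t.adjoint.domain = T0.adjoint.domain) (x : H) (hx : x ∈ T0.domain)
    (v : T0t.adjoint.domain) :
    bform T0 T0t hW ⟨x, (dom_sub hF).1.1 hx⟩ v = 0 := by
  obtain ⟨l1, l2⟩ := dom_sub hF
  have e1 : T0t.adjoint ⟨x, l1.1 hx⟩ = T0 ⟨x, hx⟩ :=
    (l1.2 (x := ⟨x, hx⟩) (y := ⟨x, l1.1 hx⟩) rfl).symm
  have h2 := LinearPMap.adjoint_isFormalAdjoint hF.dense' ⟨(v : H), hW.le v.2⟩ ⟨x, hx⟩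
  simp only [bform, pInner]
  rw [e1]
  simp only at h2
  rw [h2, sub_self]

/-- A graph-bounded functional vanishing on `D` is represented by the boundary form. -/
theorem exists_rep (hF : IsDualPairT12 T0 T0t lam)
    (hW : T0t.adjoint.domain = T0.adjoint.domain)
    (l : T0t.adjoint.domain →ₗ[ℂ] ℂ) (C : ℝ) (hC : ∀ v, ‖l v‖ ≤ C * gnorm T0t v)
    (h0 : ∀ (x : H) (hx : x ∈ T0.domain), l ⟨x, (dom_sub hF).1.1 hx⟩ = 0) :
    ∃ u', ∀ v, l v = bform T0 T0t hW v u' := by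
  let j : T0t.adjoint.domain →ₗ[ℂ] H × H :=
    (Submodule.subtype _).prod T0t.adjoint.toFun
  have hj : Function.Injective j := fun a b hab => Subtype.ext (congrArg Prod.fst hab)
  let e := LinearEquiv.ofInjective j hj
  let f : LinearMap.range j →ₗ[ℂ] ℂ := l ∘ₗ e.symm.toLinearMap
  have hf : ∀ y, ‖f y‖ ≤ (2 * |C|) * ‖y‖ := by
    intro y
    obtain ⟨v, rfl⟩ := e.surjective y
    have e1 : f (e v) = l v := by simp [f]
    have e2 : ‖e v‖ = ‖j v‖ := rfl
    rw [e1, e2]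
    have a1 : ‖(v : H)‖ ≤ ‖j v‖ := norm_fst_le (j v)
    have a2 : ‖T0t.adjoint v‖ ≤ ‖j v‖ := norm_snd_le (j v)
    have a3 : gnorm T0t v ≤ 2 * ‖j v‖ := by unfold gnorm; linarith
    have a4 : 0 ≤ gnorm T0t v := by unfold gnorm; positivity
    calc ‖l v‖ ≤ C * gnorm T0t v := hC v
      _ ≤ |C| * gnorm T0t v := mul_le_mul_of_nonneg_right (le_abs_self C) a4
      _ ≤ |C| * (2 * ‖j v‖) := mul_le_mul_of_nonneg_left a3 (abs_nonneg C)
      _ = _ := by ring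
  obtain ⟨F, hFe, -⟩ := exists_extension_norm_eq (LinearMap.range j) (f.mkContinuous _ hf)
  have hFl : ∀ v, F (j v) = l v := by
    intro v
    have := hFe (e v)
    simpa [f, e] using this
  let p : H := (InnerProductSpace.toDual ℂ H).symm (F.comp (ContinuousLinearMap.inl ℂ H H))
  let q : H := (InnerProductSpace.toDual ℂ H).symm (F.comp (ContinuousLinearMap.inr ℂ H H))
  have hp : ∀ x, ⟪p, x⟫_ℂ = F (x, 0) := fun x => by simp [p]
  have hq : ∀ x, ⟪q, x⟫_ℂ = F (0, x) := fun x => by simp [q]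
  have hl : ∀ v : T0t.adjoint.domain, l v = ⟪p, (v : H)⟫_ℂ + ⟪q, T0t.adjoint v⟫_ℂ := by
    intro v
    rw [← hFl, hp, hq, ← _root_.map_add]
    congr 1
    simp [j]
  have hadj : ∀ x : T0.domain, ⟪-p, (x : H)⟫_ℂ = ⟪q, T0 x⟫_ℂ := by
    rintro ⟨x, hx⟩
    obtain ⟨l1, l2⟩ := dom_sub hF
    have e1 : T0t.adjoint ⟨x, l1.1 hx⟩ = T0 ⟨x, hx⟩ :=
      (l1.2 (x := ⟨x, hx⟩) (y := ⟨x, l1.1 hx⟩) rfl).symm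
    have h := hl ⟨x, l1.1 hx⟩
    rw [h0 x hx, e1] at h
    rw [inner_neg_left]
    simp only at h ⊢
    linear_combination h
  have hqm : q ∈ T0.adjoint.domain := LinearPMap.mem_adjoint_domain_of_exists q ⟨-p, hadj⟩
  have hqv : T0.adjoint ⟨q, hqm⟩ = -p := LinearPMap.adjoint_apply_eq hF.dense' _ hadj
  refine ⟨⟨q, hW.ge hqm⟩, fun v => ?_⟩
  simp only [bform, pInner]
  rw [hqv, hl, inner_neg_left]
  ring

end Friedrichs

/-- Lemma 2.5: if `M` satisfies the (M)-boundary conditions, then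
`ker D = ker M = ker M*` and `ran D = ran M = ran M*`. -/
theorem ker_ran_D_eq_ker_ran_M
    (T0 T0t : H →ₗ.[ℂ] H) (lam mu : ℝ) (hF : IsFriedrichsPair T0 T0t lam mu)
    (hW : T0t.adjoint.domain = T0.adjoint.domain)
    (M : MOp T0t) (hM : MBC T0 T0t hW M.m) :
    ({u : ↥T0t.adjoint.domain | ∀ v, bform T0 T0t hW u v = 0} =
        {u | ∀ v, M.m u v = 0} ∧
      {u : ↥T0t.adjoint.domain | ∀ v, M.m u v = 0} =
        {u | ∀ v, starRingEnd ℂ (M.m v u) = 0}) ∧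
    ({f : ↥T0t.adjoint.domain → ℂ | ∃ u, f = fun v => bform T0 T0t hW u v} =
        {f | ∃ u, f = fun v => M.m u v} ∧
      {f : ↥T0t.adjoint.domain → ℂ | ∃ u, f = fun v => M.m u v} =
        {f | ∃ u, f = fun v => starRingEnd ℂ (M.m v u)}) := by
  obtain ⟨C, hC⟩ := M.bounded
  have hD := hF.toIsDualPairT12
  refine form_ker_ran (bform T0 T0t hW) M.m (bform_herm hD hW) M.add_left M.smul_left
    M.add_right M.smul_right ?_ ?_ hM.1 hM.2 ?_
  · intro u v w
    simp only [bform, pInner, LinearPMap.map_add, Submodule.coe_add, inner_add_right]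
    ring
  · intro c u w
    simp only [bform, pInner, LinearPMap.map_smul, Submodule.coe_smul, inner_smul_right]
    ring
  · intro hk u
    let l : T0t.adjoint.domain →ₗ[ℂ] ℂ :=
      { toFun := fun v => M.m v u
        map_add' := fun a b => M.add_left a b u
        map_smul' := fun c a => M.smul_left c a u }
    refine exists_rep hD hW l (C * gnorm T0t u) (fun v => ?_) (fun x hx => ?_)
    · refine (hC v u).trans (le_of_eq ?_)
      ring
    · exact hk _ (bform_dom hD hW x hx) u
end
end
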